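/- Let (Q, n) be a regular local ring of embedding dimension 2. If f ∈ n² and i ≥ 2 are such that n^i is not contained in the principal ideal (f), then the ideal (f) + n^i cannot be generated by two elements, i.e., μ((f) + n^i) > 2. -/

import Mathlib

open IsLocalRing

/-!
Write `n` for the maximal ideal. The ring `Q` is a domain, and if `n = (x, y)` then `(x)` is a prime
ideal not containing `y`; hence `x, y` is a regular sequence, and for `f ≠ 0` in `n` the ring
`R = Q/(f)` has positive depth: an element of `R` killed by a power of `n` is zero
(`mem_span_of_pow_mul_mem`).

If `(f) + n^i` is generated by two elements, it is of the form `(g, b)` with `g ∈ n²` and `b ∈ n^i`: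
for `f ∈ n^i` this is clear, and otherwise Nakayama's lemma shows that `f` is a minimal
generator, so `g = f` works and the second generator can be corrected by a multiple of `f`.
In `R = Q/(g)` the ideal `n^i` is then generated by `b`, which is a nonzerodivisor because `R` has
positive depth. So `n` is invertible in the local ring `R`, hence principal:
`n = (x) + (g) ⊆ (x) + n²`. By Nakayama `n = (x)`, contradicting Krull's principal ideal
theorem since `dim Q = 2` (`not_pow_le_span_singleton`).
-/

section

variable {Q : Type*} [CommRing Q] [IsLocalRing Q] [IsNoetherianRing Q]

/-! ### Regularity: the domain property and positive depth of `Q/(f)` -/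

/-- Krull's principal ideal theorem: in dimension two, no power of the maximal ideal lies in a
proper principal ideal. -/
lemma not_pow_le_span_singleton (hdim : ringKrullDim Q = 2) {c : Q} (hc : c ∈ maximalIdeal Q)
    (k : ℕ) : ¬ maximalIdeal Q ^ k ≤ Ideal.span {c} := by
  intro h
  have hmin : maximalIdeal Q ∈ (Ideal.span {c}).minimalPrimes := by
    refine ⟨⟨inferInstance, (Ideal.span_singleton_le_iff_mem _).2 hc⟩, fun p hp _ ↦ ?_⟩
    have := hp.1
    exact Ideal.IsPrime.le_of_pow_le (h.trans hp.2)
  have h1 := Ideal.height_le_one_of_isPrincipal_of_mem_minimalPrimes (Ideal.span {c}) _ hmin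
  have h2 := IsLocalRing.maximalIdeal_height_eq_ringKrullDim (R := Q)
  rw [hdim] at h2
  have h3 : (maximalIdeal Q).height = 2 := WithBot.coe_injective h2
  rw [h3] at h1
  exact absurd h1 (by decide)

lemma pow_notMem_span (hdim : ringKrullDim Q = 2) {x y : Q}
    (hxy : Ideal.span {x, y} = maximalIdeal Q) (k : ℕ) : y ^ k ∉ Ideal.span {x} := by
  intro h
  have hx : x ∈ maximalIdeal Q := hxy ▸ Ideal.subset_span (by simp)
  have hrad : maximalIdeal Q ≤ (Ideal.span {x}).radical := by
    rw [← hxy, Ideal.span_le]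
    rintro z (rfl | rfl)
    · exact Ideal.le_radical (Ideal.mem_span_singleton_self _)
    · exact ⟨k, h⟩
  obtain ⟨N, hN⟩ := Ideal.exists_pow_le_of_le_radical_of_fg hrad (IsNoetherian.noetherian _)
  exact not_pow_le_span_singleton hdim hx N hN

/-- The quotient `Q/(x)` has principal maximal ideal `(y)`, so by Krull's intersection theorem
each of its nonzero elements is a unit times a power of `y`. -/
lemma exists_unit_mul_pow {x y : Q} (hxy : Ideal.span {x, y} = maximalIdeal Q) {a : Q}
    (ha : a ∉ Ideal.span {x}) : ∃ u r : Q, ∃ k : ℕ, IsUnit u ∧ a = u * y ^ k + r * x := by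
  by_contra hcon
  apply ha
  have key : ∀ k : ℕ, ∃ u r : Q, a = u * y ^ k + r * x := by
    intro k
    induction k with
    | zero => exact ⟨a, 0, by simp⟩
    | succ k ih =>
      obtain ⟨u, r, h⟩ := ih
      have hu : u ∈ maximalIdeal Q := by
        by_contra hu
        exact hcon ⟨u, r, k, by simpa using hu, h⟩
      rw [← hxy, Ideal.mem_span_pair] at hu
      obtain ⟨s, t, rfl⟩ := hu
      exact ⟨t, s * y ^ k + r, by rw [h]; ring⟩
  by_cases htop : Ideal.span {x} = ⊤
  · rw [htop]; trivial
  have : Nontrivial (Q ⧸ Ideal.span {x}) := Ideal.Quotient.nontrivial_iff.2 htop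
  have : IsLocalRing (Q ⧸ Ideal.span {x}) :=
    IsLocalRing.of_surjective' _ Ideal.Quotient.mk_surjective
  have hy : y ∈ maximalIdeal Q := hxy ▸ Ideal.subset_span (by simp)
  have hI : Ideal.span {Ideal.Quotient.mk (Ideal.span {x}) y} ≠ ⊤ := by
    rw [Ne, Ideal.span_singleton_eq_top]
    intro hu
    have := IsLocalHom.of_surjective (Ideal.Quotient.mk (Ideal.span {x}))
      Ideal.Quotient.mk_surjective
    exact hy (isUnit_of_map_unit _ _ hu)
  rw [← Ideal.Quotient.eq_zero_iff_mem, ← Ideal.mem_bot, ← Ideal.iInf_pow_eq_bot_of_isLocalRing _ hI,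
    Ideal.mem_iInf]
  intro k
  obtain ⟨u, r, h⟩ := key k
  rw [Ideal.span_singleton_pow, Ideal.mem_span_singleton]
  refine ⟨Ideal.Quotient.mk _ u, ?_⟩
  have hx0 : Ideal.Quotient.mk (Ideal.span {x}) x = 0 :=
    Ideal.Quotient.eq_zero_iff_mem.2 (Ideal.mem_span_singleton_self x)
  rw [h, map_add, map_mul, map_mul, map_pow, hx0]
  ring

lemma isPrime_span_singleton (hdim : ringKrullDim Q = 2) {x y : Q}
    (hxy : Ideal.span {x, y} = maximalIdeal Q) : (Ideal.span {x}).IsPrime := by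
  refine ⟨fun h ↦ pow_notMem_span hdim hxy 0 (h ▸ trivial), fun {a b} hab ↦ ?_⟩
  by_contra! hcon
  obtain ⟨u, r, k, hu, ha⟩ := exists_unit_mul_pow hxy hcon.1
  obtain ⟨v, s, l, hv, hb⟩ := exists_unit_mul_pow hxy hcon.2
  refine pow_notMem_span hdim hxy (k + l) ?_
  rw [← Ideal.unit_mul_mem_iff_mem _ (hu.mul hv)]
  rw [Ideal.mem_span_singleton] at hab ⊢
  obtain ⟨t, ht⟩ := hab
  refine ⟨t - u * y ^ k * s - r * v * y ^ l - r * s * x, ?_⟩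
  rw [ha, hb] at ht
  linear_combination ht

/-- Some generator `x + y^k` of the maximal ideal lies in no minimal prime; a minimal prime `p`
inside the prime `(x + y^k)` then satisfies `p = (x + y^k) p`, so `p = 0` by Nakayama. -/
lemma isDomain_of_span_pair (hdim : ringKrullDim Q = 2) {x y : Q}
    (hxy : Ideal.span {x, y} = maximalIdeal Q) : IsDomain Q := by
  have hy : y ∈ maximalIdeal Q := hxy ▸ Ideal.subset_span (by simp)
  have hx : x ∈ maximalIdeal Q := hxy ▸ Ideal.subset_span (by simp)
  obtain ⟨k, hk⟩ : ∃ k : ℕ, ∀ p ∈ minimalPrimes Q, x + y ^ (k + 1) ∉ p := by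
    by_contra! hcon
    choose p hp hmem using hcon
    have : Finite (minimalPrimes Q) := minimalPrimes.finite_of_isNoetherianRing Q
    obtain ⟨k, l, hkl, heq⟩ :=
      Finite.exists_ne_map_eq_of_infinite (fun k ↦ (⟨p k, hp k⟩ : minimalPrimes Q))
    replace heq : p k = p l := congrArg Subtype.val heq
    wlog hlt : k < l generalizing k l
    · exact this l k hkl.symm heq.symm (by omega)
    have hprime : (p k).IsPrime := (hp k).1.1
    obtain ⟨d, rfl⟩ := Nat.exists_eq_add_of_lt hlt
    have h1 : y ^ (k + 1) * (1 - y ^ (d + 1)) ∈ p k := by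
      have := (p k).sub_mem (hmem k) (heq ▸ hmem (k + d + 1))
      convert this using 1
      ring
    have hu : IsUnit (1 - y ^ (d + 1)) := by
      by_contra hu
      have h2 : (1 - y ^ (d + 1)) ∈ maximalIdeal Q := hu
      have h3 := (maximalIdeal Q).add_mem h2
        ((maximalIdeal Q).pow_mem_of_mem hy (d + 1) (by omega))
      rw [sub_add_cancel] at h3
      exact h3 isUnit_one
    have h2 : y ∈ p k := hprime.mem_of_pow_mem _ ((Ideal.mul_unit_mem_iff_mem _ hu).1 h1)
    have h3 : x ∈ p k := by
      have := (p k).sub_mem (hmem k) ((p k).pow_mem_of_mem h2 (k + 1) (by omega))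
      simpa using this
    have h4 : maximalIdeal Q ≤ p k := by
      rw [← hxy, Ideal.span_le]
      rintro z (rfl | rfl) <;> assumption
    -- A minimal prime equal to `n` would make `(0)` contain a power of `n`.
    have hrad : maximalIdeal Q ≤ (⊥ : Ideal Q).radical := by
      rw [Ideal.radical_eq_sInf]
      refine le_sInf fun q hq ↦ ?_
      have := hq.2
      exact h4.trans ((hp k).2 ⟨this, bot_le⟩ (((le_maximalIdeal this.ne_top)).trans h4))
    obtain ⟨N, hN⟩ := Ideal.exists_pow_le_of_le_radical_of_fg hrad (IsNoetherian.noetherian _)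
    exact not_pow_le_span_singleton hdim (Ideal.zero_mem _) N (hN.trans bot_le)
  have hgen : Ideal.span {x + y ^ (k + 1), y} = maximalIdeal Q := by
    rw [← hxy, pow_succ]
    exact Ideal.span_pair_add_mul_right x y (y ^ k)
  have hprime := isPrime_span_singleton hdim hgen
  obtain ⟨p, hp, hple⟩ := Ideal.exists_minimalPrimes_le (bot_le : ⊥ ≤ Ideal.span {x + y ^ (k + 1)})
  have hpp : p.IsPrime := hp.1.1
  obtain rfl : p = ⊥ := by
    refine Submodule.eq_bot_of_le_smul_of_le_jacobson_bot (maximalIdeal Q) p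
      (IsNoetherian.noetherian _) (fun z hz ↦ ?_) (maximalIdeal_le_jacobson _)
    obtain ⟨w, rfl⟩ := Ideal.mem_span_singleton.1 (hple hz)
    have hw : w ∈ p := (hpp.mem_or_mem hz).resolve_left (hk p hp)
    exact Ideal.mul_mem_mul (hgen ▸ Ideal.subset_span (by simp)) hw
  exact IsDomain.of_bot_isPrime Q

/-- The quotient `Q/(f)` has no nonzero element killed by `n`: if `x z = f u` and `y z = f v`, then
`u y = v x`, so `x` divides `u` and `f` divides `z`. For `f = 0` this holds as `Q` is a domain. -/
lemma mem_span_of_mul_mem (hdim : ringKrullDim Q = 2) {x y : Q}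
    (hxy : Ideal.span {x, y} = maximalIdeal Q) {f z : Q}
    (h : ∀ w ∈ maximalIdeal Q, w * z ∈ Ideal.span {f}) : z ∈ Ideal.span {f} := by
  have := isDomain_of_span_pair hdim hxy
  have hprime := isPrime_span_singleton hdim hxy
  have hy : y ∈ maximalIdeal Q := hxy ▸ Ideal.subset_span (by simp)
  have hx : x ∈ maximalIdeal Q := hxy ▸ Ideal.subset_span (by simp)
  have hx0 : x ≠ 0 := by
    rintro rfl
    refine pow_notMem_span (x := y) (y := 0) hdim (by rw [Ideal.span_pair_comm, hxy]) 1 (by simp)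
  obtain ⟨u, hu⟩ := Ideal.mem_span_singleton.1 (h x hx)
  obtain ⟨v, hv⟩ := Ideal.mem_span_singleton.1 (h y hy)
  rw [Ideal.mem_span_singleton]
  by_cases hf : f = 0
  · subst hf
    have : z = 0 := by simpa [hx0] using hu
    simp [this]
  have huv : u * y = x * v := mul_left_cancel₀ hf (by linear_combination x * hv - y * hu)
  have hmem : u * y ∈ Ideal.span {x} := Ideal.mem_span_singleton.2 ⟨v, huv⟩
  have hyx : y ∉ Ideal.span {x} := by simpa using pow_notMem_span hdim hxy 1
  obtain ⟨t, rfl⟩ := Ideal.mem_span_singleton.1 ((hprime.mem_or_mem hmem).resolve_right hyx)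
  exact ⟨t, mul_left_cancel₀ hx0 (by linear_combination hu)⟩

lemma mem_span_of_pow_mul_mem (hdim : ringKrullDim Q = 2) {x y : Q}
    (hxy : Ideal.span {x, y} = maximalIdeal Q) {f : Q} (k : ℕ) {z : Q}
    (h : ∀ w ∈ maximalIdeal Q ^ k, w * z ∈ Ideal.span {f}) : z ∈ Ideal.span {f} := by
  induction k generalizing z with
  | zero => simpa using h 1 (by simp)
  | succ k ih =>
    refine mem_span_of_mul_mem hdim hxy fun w hw ↦ ih fun v hv ↦ ?_
    rw [← mul_assoc]
    exact h _ (pow_succ (maximalIdeal Q) k ▸ Ideal.mul_mem_mul hv hw)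

/-! ### Powers of the maximal ideal modulo `f` -/

lemma isUnit_one_sub {r : Q} (hr : r ∈ maximalIdeal Q) : IsUnit (1 - r) := by
  by_contra hu
  have h := (maximalIdeal Q).add_mem hu hr
  rw [sub_add_cancel] at h
  exact h isUnit_one

/-- For `f ∈ n²`, no positive power of `n` becomes principal in `Q/(f)`: its generator `b` would be a
nonzerodivisor there, making `n` invertible, hence principal, modulo `f`. -/
lemma not_pow_le_span_pair (hdim : ringKrullDim Q = 2) {x y : Q}
    (hxy : Ideal.span {x, y} = maximalIdeal Q) {f b : Q} (hf : f ∈ maximalIdeal Q ^ 2) {j : ℕ}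
    (hb : b ∈ maximalIdeal Q ^ (j + 1)) : ¬ maximalIdeal Q ^ (j + 1) ≤ Ideal.span {f, b} := by
  intro hle
  have hfm : f ∈ maximalIdeal Q := Ideal.pow_le_self two_ne_zero hf
  have hreg : ∀ z, z * b ∈ Ideal.span {f} → z ∈ Ideal.span {f} := by
    intro z hz
    refine mem_span_of_pow_mul_mem hdim hxy (j + 1) fun w hw ↦ ?_
    obtain ⟨α, β, rfl⟩ := Ideal.mem_span_pair.1 (hle hw)
    have h1 : z * α * f ∈ Ideal.span {f} :=
      Ideal.mul_mem_left _ _ (Ideal.mem_span_singleton_self f)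
    convert add_mem h1 (Ideal.mul_mem_left _ β hz) using 1
    ring
  have hprod : ∀ s ∈ maximalIdeal Q, ∀ t ∈ maximalIdeal Q ^ j,
      ∃ d c, d * f + c * b = s * t := fun s hs t ht ↦
    Ideal.mem_span_pair.1 (hle (pow_succ' (maximalIdeal Q) j ▸ Ideal.mul_mem_mul hs ht))
  obtain ⟨s, hs, t, ht, d, c, hc, hst⟩ : ∃ s ∈ maximalIdeal Q, ∃ t ∈ maximalIdeal Q ^ j,
      ∃ d c, IsUnit c ∧ d * f + c * b = s * t := by
    by_contra! hcon
    -- Otherwise `b ∈ n b + (f)`, so `b ∈ (f)` and `Q/(f)` would be zero.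
    have h1 : b ∈ Ideal.span {f} ⊔ maximalIdeal Q * Ideal.span {b} := by
      have : maximalIdeal Q ^ (j + 1) ≤ Ideal.span {f} ⊔ maximalIdeal Q * Ideal.span {b} := by
        rw [pow_succ', Ideal.mul_le]
        intro s hs t ht
        obtain ⟨d, c, h⟩ := hprod s hs t ht
        have hc : c ∈ maximalIdeal Q := fun hc ↦ hcon s hs t ht d c hc h
        rw [← h]
        exact Submodule.add_mem_sup
          (Ideal.mul_mem_left _ _ (Ideal.mem_span_singleton_self f))
          (Ideal.mul_mem_mul hc (Ideal.mem_span_singleton_self b))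
      exact this hb
    obtain ⟨p, hp, q, hq, hpq⟩ := Submodule.mem_sup.1 h1
    obtain ⟨r, hr, rfl⟩ := Ideal.mem_mul_span_singleton.1 hq
    have h2 : (1 - r) * b ∈ Ideal.span {f} := by
      have : (1 - r) * b = p := by linear_combination -hpq
      rwa [this]
    have h3 := hreg _ h2
    exact (Ideal.span_singleton_eq_top.not.2 hfm)
      (Ideal.eq_top_of_isUnit_mem _ h3 (isUnit_one_sub hr))
  have hprin : maximalIdeal Q ≤ Ideal.span {s} ⊔ maximalIdeal Q * maximalIdeal Q := by
    intro z hz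
    obtain ⟨d', c', h⟩ := hprod z hz t ht
    have h1 : (c * z - c' * s) ∈ Ideal.span {f} := by
      apply hreg
      rw [← Ideal.unit_mul_mem_iff_mem _ hc]
      -- `s * ((c z - c' s) t)` is `c b (c z - c' s)` modulo `f`.
      refine Ideal.mem_span_singleton.2
        ⟨s * (c * d' - c' * d) - (c * z - c' * s) * d, ?_⟩
      linear_combination (c * z - c' * s) * hst - s * (c * h - c' * hst)
    rw [← Ideal.unit_mul_mem_iff_mem _ hc]
    have h2 : c * z = c' * s + (c * z - c' * s) := by ring
    rw [h2]
    refine Submodule.add_mem_sup (Ideal.mul_mem_left _ _ (Ideal.mem_span_singleton_self s)) ?_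
    rw [← pow_two]
    exact (Ideal.span_singleton_le_iff_mem _).2 hf h1
  have hnak : maximalIdeal Q ≤ Ideal.span {s} :=
    Submodule.le_of_le_smul_of_le_jacobson_bot (IsNoetherian.noetherian _)
      (maximalIdeal_le_jacobson _) hprin
  exact not_pow_le_span_singleton hdim hs 1 (by rwa [pow_one])

/-! ### Two-generated ideals `(f) + n^i` -/

/-- If `f` can replace the generator `a` of `(a, b) = (f) + n^i`, then reducing `b` modulo `f` gives
an element of `n^i` that still generates the ideal together with `f`. -/
lemma exists_mem_pow_span_pair {f a b u v : Q} {i : ℕ}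
    (hJ : Ideal.span {a, b} = Ideal.span {f} + maximalIdeal Q ^ i) (hu : IsUnit u)
    (h : u * a + v * b = f) :
    ∃ w ∈ maximalIdeal Q ^ i, maximalIdeal Q ^ i ≤ Ideal.span {f, w} := by
  have hb : b ∈ Ideal.span {f} ⊔ maximalIdeal Q ^ i := hJ.le (Ideal.subset_span (by simp))
  obtain ⟨p, hp, w, hw, hpw⟩ := Submodule.mem_sup.1 hb
  obtain ⟨r, rfl⟩ := Ideal.mem_span_singleton.1 hp
  refine ⟨w, hw, le_trans (le_trans le_sup_right hJ.ge) ?_⟩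
  have hb' : b ∈ Ideal.span {f, w} := Ideal.mem_span_pair.2 ⟨r, 1, by linear_combination hpw⟩
  have hf' : f ∈ Ideal.span {f, w} := Ideal.subset_span (by simp)
  rw [Ideal.span_le]
  rintro z (rfl | rfl)
  · refine (Ideal.unit_mul_mem_iff_mem _ hu).1 ?_
    have h1 : u * z = f - v * b := by linear_combination h
    rw [h1]
    exact sub_mem hf' (Ideal.mul_mem_left _ _ hb')
  · exact hb'

end

theorem stmt1 (Q : Type*) [CommRing Q] [IsLocalRing Q] [IsNoetherianRing Q]
    (hdim : ringKrullDim Q = 2)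
    (hreg : ∃ x y : Q, Ideal.span {x, y} = maximalIdeal Q)
    (f : Q) (hf : f ∈ (maximalIdeal Q) ^ 2)
    (i : ℕ) (hi : 2 ≤ i)
    (hni : ¬ (maximalIdeal Q) ^ i ≤ Ideal.span {f}) :
    ¬ ∃ a b : Q, Ideal.span {a, b} = Ideal.span {f} + (maximalIdeal Q) ^ i := by
  rintro ⟨a, b, hJ⟩
  obtain ⟨x, y, hxy⟩ := hreg
  obtain ⟨j, rfl⟩ : ∃ j, i = j + 1 := ⟨i - 1, by omega⟩
  by_cases hfi : f ∈ maximalIdeal Q ^ (j + 1)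
  · have hJ' : Ideal.span {a, b} = maximalIdeal Q ^ (j + 1) :=
      hJ.trans (sup_eq_right.2 ((Ideal.span_singleton_le_iff_mem _).2 hfi))
    have ha : a ∈ maximalIdeal Q ^ (j + 1) := hJ' ▸ Ideal.subset_span (by simp)
    have hb : b ∈ maximalIdeal Q ^ (j + 1) := hJ' ▸ Ideal.subset_span (by simp)
    exact not_pow_le_span_pair hdim hxy (Ideal.pow_le_pow_right hi ha) hb hJ'.ge
  have hfJ : f ∈ Ideal.span {a, b} := by
    rw [hJ]
    exact Submodule.mem_sup_left (Ideal.mem_span_singleton_self f)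
  obtain ⟨u, v, huv⟩ := Ideal.mem_span_pair.1 hfJ
  suffices ∃ w ∈ maximalIdeal Q ^ (j + 1), maximalIdeal Q ^ (j + 1) ≤ Ideal.span {f, w} by
    obtain ⟨w, hw, hle⟩ := this
    exact not_pow_le_span_pair hdim hxy hf hw hle
  by_cases hu : IsUnit u
  · exact exists_mem_pow_span_pair hJ hu huv
  by_cases hv : IsUnit v
  · exact exists_mem_pow_span_pair (by rwa [Ideal.span_pair_comm]) hv (by rwa [add_comm])
  -- Now `f ∈ n J ⊆ n f + n^i`, which forces `f ∈ n^i`.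
  have hdec : ∀ z ∈ Ideal.span {a, b}, ∃ r, ∃ w ∈ maximalIdeal Q ^ (j + 1), f * r + w = z := by
    intro z hz
    rw [hJ] at hz
    obtain ⟨p, hp, w, hw, hpw⟩ := Submodule.mem_sup.1 hz
    obtain ⟨r, rfl⟩ := Ideal.mem_span_singleton.1 hp
    exact ⟨r, w, hw, hpw⟩
  obtain ⟨r, w, hw, hra⟩ := hdec a (Ideal.subset_span (by simp))
  obtain ⟨r', w', hw', hrb⟩ := hdec b (Ideal.subset_span (by simp))
  have hr : r * u + r' * v ∈ maximalIdeal Q :=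
    add_mem (Ideal.mul_mem_left _ _ hu) (Ideal.mul_mem_left _ _ hv)
  refine absurd ((Ideal.unit_mul_mem_iff_mem _ (isUnit_one_sub hr)).1 ?_) hfi
  have h1 : (1 - (r * u + r' * v)) * f = u * w + v * w' := by
    linear_combination -u * hra - v * hrb - huv
  rw [h1]
  exact add_mem (Ideal.mul_mem_left _ _ hw) (Ideal.mul_mem_left _ _ hw')
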